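/- Let n ≥ 1, let H : ℝ^{2n} → ℝ be smooth, let β ∈ ℝ, and let μ₀ : C_c^∞(ℝ^{2n}) → ℂ be a ℂ-linear functional (no continuity assumed) satisfying the static classical KMS condition μ₀({f, g} − β·g·{f, H}) = 0 for all f, g ∈ C_c^∞(ℝ^{2n}). Then there exists a constant c ∈ ℂ such that μ₀(f) = c ∫_{ℝ^{2n}} e^{−βH(x)} f(x) d^{2n}x for all f ∈ C_c^∞(ℝ^{2n}). -/

import Mathlib

open MeasureTheory

/-- The `i`-th partial derivative of a function on `ℝᵐ` (modeled as Euclidean space). -/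
noncomputable def partialDeriv {m : ℕ} (f : EuclideanSpace ℝ (Fin m) → ℂ) (i : Fin m) :
    EuclideanSpace ℝ (Fin m) → ℂ :=
  fun x => fderiv ℝ f x (EuclideanSpace.single i 1)

/-- The standard Poisson bracket on `ℝ^{2n}`:
`{f, g} = Σ_{k<n} (∂f/∂x_k ∂g/∂x_{n+k} − ∂f/∂x_{n+k} ∂g/∂x_k)`. -/
noncomputable def poissonBracket {n : ℕ} (f g : EuclideanSpace ℝ (Fin (2 * n)) → ℂ) :
    EuclideanSpace ℝ (Fin (2 * n)) → ℂ :=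
  fun x => ∑ k : Fin n,
    (partialDeriv f ⟨k.1, by have := k.isLt; omega⟩ x *
        partialDeriv g ⟨n + k.1, by have := k.isLt; omega⟩ x -
      partialDeriv f ⟨n + k.1, by have := k.isLt; omega⟩ x *
        partialDeriv g ⟨k.1, by have := k.isLt; omega⟩ x)

/-- `C_c^∞(ℝ^{2n})`: smooth compactly supported complex-valued functions on `ℝ^{2n}`. -/
noncomputable def TestFunctions2 (n : ℕ) :
    Submodule ℂ (EuclideanSpace ℝ (Fin (2 * n)) → ℂ) where
  carrier := {f | ContDiff ℝ (⊤ : ℕ∞) f ∧ HasCompactSupport f}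
  add_mem' := fun hf hg => ⟨hf.1.add hg.1, hf.2.add hg.2⟩
  zero_mem' := ⟨contDiff_const, HasCompactSupport.zero⟩
  smul_mem' := fun c f hf => ⟨hf.1.const_smul c,
    IsCompact.of_isClosed_subset hf.2 (isClosed_tsupport _)
      (tsupport_smul_subset_right (fun _ => c) f)⟩


open Set Filter Topology

abbrev EE (m : ℕ) := EuclideanSpace ℝ (Fin m)

noncomputable abbrev ee {m : ℕ} (i : Fin m) : EE m := EuclideanSpace.single i (1 : ℝ)

lemma smooth_int {m : ℕ} (k : EE m → ℝ → ℂ) (R : ℝ)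
    (hk : ContDiff ℝ (⊤ : ℕ∞) (fun p : EE m × ℝ => k p.1 p.2))
    (h0 : ∀ x t, k x t ≠ 0 → |t| ≤ R) :
    ContDiff ℝ (⊤ : ℕ∞) (fun x => ∫ t, k x t) := by
  have h := MeasureTheory.contDiffOn_convolution_right_with_param_comp (μ := (volume : Measure ℝ))
    (ContinuousLinearMap.lsmul ℝ ℝ : ℝ →L[ℝ] ℂ →L[ℝ] ℂ) (s := (univ : Set (EE m)))
    (v := fun _ => (0 : ℝ)) (n := ⊤) contDiffOn_const (f := fun _ => (1 : ℝ)) (g := k) (k := Icc (-R) R)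
    isOpen_univ isCompact_Icc (by
      intro p x _ hx
      by_contra hne
      exact hx (abs_le.1 (h0 p x hne))) (locallyIntegrable_const _) hk.contDiffOn
  rw [contDiffOn_univ] at h
  convert h using 2 with x
  simp only [convolution_def, ContinuousLinearMap.lsmul_apply, one_smul, zero_sub]
  exact (integral_neg_eq_self (k x) volume).symm

lemma smooth_int_Iic {m : ℕ} (k : EE m → ℝ → ℂ) (R : ℝ) (j : Fin m)
    (hk : ContDiff ℝ (⊤ : ℕ∞) (fun p : EE m × ℝ => k p.1 p.2))
    (h0 : ∀ x t, k x t ≠ 0 → |t| ≤ R) :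
    ContDiff ℝ (⊤ : ℕ∞) (fun x : EE m => ∫ t in Iic (x j), k x t) := by
  have hv : ContDiff ℝ (⊤ : ℕ∞) (fun x : EE m => x j) := by fun_prop
  have h := MeasureTheory.contDiffOn_convolution_right_with_param_comp (μ := (volume : Measure ℝ))
    (ContinuousLinearMap.lsmul ℝ ℝ : ℝ →L[ℝ] ℂ →L[ℝ] ℂ) (s := (univ : Set (EE m)))
    (v := fun x => x j) (n := ⊤) hv.contDiffOn
    (f := (Ici (0 : ℝ)).indicator (fun _ => (1 : ℝ))) (g := k) (k := Icc (-R) R)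
    isOpen_univ isCompact_Icc (by
      intro p x _ hx
      by_contra hne
      exact hx (abs_le.1 (h0 p x hne)))
      ((locallyIntegrable_const _).indicator measurableSet_Ici) hk.contDiffOn
  rw [contDiffOn_univ] at h
  convert h using 2 with x
  simp only [convolution_def, ContinuousLinearMap.lsmul_apply]
  rw [← integral_indicator measurableSet_Iic,
    ← integral_sub_left_eq_self ((Iic (x j)).indicator (k x)) volume (x j)]
  congr 1
  ext t
  by_cases ht : 0 ≤ t <;> simp [indicator, ht]

lemma step {m : ℕ} (ρ : ℝ → ℂ) (hρ : ContDiff ℝ (⊤ : ℕ∞) ρ) (R : ℝ)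
    (hρR : ∀ t, ρ t ≠ 0 → |t| ≤ R) (hρ1 : ∫ t, ρ t = 1)
    (S : Finset (Fin m)) (j : Fin m) (hj : j ∉ S) (ψ : EE m → ℂ)
    (hψ : ContDiff ℝ (⊤ : ℕ∞) ψ)
    (hinv : ∀ i ∈ S, ∀ (t : ℝ) x, ψ (x + t • ee i) = ψ x)
    (hsupp : ∀ x, ψ x ≠ 0 → ∀ i ∉ S, |x i| ≤ R) :
    ∃ ψ' Ψ : EE m → ℂ, ContDiff ℝ (⊤ : ℕ∞) ψ' ∧
      (∀ i ∈ insert j S, ∀ (t : ℝ) x, ψ' (x + t • ee i) = ψ' x) ∧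
      (∀ x, ψ' x ≠ 0 → ∀ i ∉ insert j S, |x i| ≤ R) ∧
      ContDiff ℝ (⊤ : ℕ∞) Ψ ∧ HasCompactSupport Ψ ∧
      ∀ x, (∏ i ∈ S, ρ (x i)) * ψ x =
        (∏ i ∈ insert j S, ρ (x i)) * ψ' x + partialDeriv Ψ j x := by
  -- the coordinate replacement
  let u : EE m → ℝ → EE m := fun x t => x + (t - x j) • ee j
  have hu : ContDiff ℝ (⊤ : ℕ∞) (fun p : EE m × ℝ => u p.1 p.2) := by
    simp only [u]; fun_prop
  have huj : ∀ x t, u x t j = t := by intro x t; simp [u]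
  have hui : ∀ x t i, i ≠ j → u x t i = x i := by
    intro x t i hi; simp [u, hi]
  have hus : ∀ x (s : ℝ) t, u (x + s • ee j) t = u x t := by
    intro x s t; ext i
    by_cases hi : i = j
    · subst hi; rw [huj, huj]
    · rw [hui _ _ _ hi, hui _ _ _ hi]; simp [hi]
  have hut : ∀ x (s : ℝ) t i, i ≠ j → u (x + s • ee i) t = u x t + s • ee i := by
    intro x s t i hi; ext l
    by_cases hl : l = j
    · subst hl; simp [huj, hi.symm]
    · simp [hui _ _ _ hl]
  let ψ' : EE m → ℂ := fun x => ∫ t, ψ (u x t)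
  have hψu : ∀ x t, ψ (u x t) ≠ 0 → |t| ≤ R := by
    intro x t h; have := hsupp _ h j hj; rwa [huj] at this
  have hψ' : ContDiff ℝ (⊤ : ℕ∞) ψ' := smooth_int (fun x t => ψ (u x t)) R (hψ.comp hu) hψu
  have hψ'j : ∀ x (s : ℝ), ψ' (x + s • ee j) = ψ' x := by
    intro x s; simp only [ψ', hus]
  have hψ's : ∀ x, ψ' x ≠ 0 → ∀ i ∉ insert j S, |x i| ≤ R := by
    intro x hx i hi
    simp only [Finset.mem_insert, not_or] at hi
    by_contra hcon
    apply hx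
    have : ∀ t, ψ (u x t) = 0 := by
      intro t; by_contra hne
      have := hsupp _ hne i hi.2
      rw [hui _ _ _ hi.1] at this
      exact hcon this
    simp [ψ', this]
  let k : EE m → ℝ → ℂ := fun x t => ψ (u x t) - ρ t * ψ' x
  have hk : ContDiff ℝ (⊤ : ℕ∞) (fun p : EE m × ℝ => k p.1 p.2) :=
    (hψ.comp hu).sub ((hρ.comp contDiff_snd).mul (hψ'.comp contDiff_fst))
  have hkR : ∀ x t, k x t ≠ 0 → |t| ≤ R := by
    intro x t h
    by_contra hcon
    apply h
    have h1 : ψ (u x t) = 0 := by by_contra hne; exact hcon (hψu x t hne)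
    have h2 : ρ t = 0 := by by_contra hne; exact hcon (hρR t hne)
    simp [k, h1, h2]
  have cs : ∀ f : ℝ → ℂ, Continuous f → (∀ t, f t ≠ 0 → |t| ≤ R) → Integrable f := by
    intro f hf h
    apply hf.integrable_of_hasCompactSupport
    apply HasCompactSupport.intro (isCompact_Icc (a := -R) (b := R))
    intro t ht; by_contra hne; exact ht (abs_le.1 (h t hne))
  have hkc : ∀ x, Continuous (k x) := fun x => 
    hk.continuous.comp (by fun_prop : Continuous (fun t : ℝ => (x, t)))
  have hki : ∀ x, Integrable (k x) := fun x => cs _ (hkc x) (hkR x)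
  have hψi : ∀ x, Integrable (fun t => ψ (u x t)) := fun x => cs _ 
    ((hψ.comp hu).continuous.comp (by fun_prop : Continuous (fun t : ℝ => (x, t)))) (hψu x)
  have hk0 : ∀ x, ∫ t, k x t = 0 := by
    intro x
    simp only [k]
    rw [integral_sub (hψi x) ((cs ρ hρ.continuous hρR).mul_const _), integral_mul_const, hρ1]
    simp [ψ']
  let Ψ : EE m → ℂ := fun x => (∏ i ∈ S, ρ (x i)) * ∫ t in Iic (x j), k x t
  have hA : ContDiff ℝ (⊤ : ℕ∞) (fun x : EE m => ∏ i ∈ S, ρ (x i)) := by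
    apply contDiff_prod
    intro i _
    exact hρ.comp (by fun_prop)
  have hΨ : ContDiff ℝ (⊤ : ℕ∞) Ψ := hA.mul (smooth_int_Iic k R j hk hkR)
  refine ⟨ψ', Ψ, hψ', ?_, hψ's, hΨ, ?_, ?_⟩
  · intro i hi s x
    by_cases hij : i = j
    · subst hij; exact hψ'j x s
    · have hiS : i ∈ S := by simpa [hij] using hi
      simp only [ψ', hut x s _ i hij, hinv i hiS]
  · -- compact support
    have key : ∀ x, Ψ x ≠ 0 → ∀ i, |x i| ≤ R := by
      intro x hx i
      have hx1 := left_ne_zero_of_mul hx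
      have hx2 := right_ne_zero_of_mul hx
      by_cases hiS : i ∈ S
      · exact hρR _ (Finset.prod_ne_zero_iff.1 hx1 i hiS)
      by_cases hij : i = j
      · subst hij
        by_contra hcon
        rw [not_le, lt_abs] at hcon
        apply hx2
        rcases hcon with h | h
        · rw [setIntegral_eq_integral_of_forall_compl_eq_zero, hk0]
          intro t ht
          by_contra hne
          have := abs_le.1 (hkR x t hne)
          simp at ht; linarith
        · apply setIntegral_eq_zero_of_forall_eq_zero
          intro t ht
          by_contra hne
          have := abs_le.1 (hkR x t hne)
          simp at ht; linarith
      · by_contra hcon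
        apply hx2
        have : ∀ t, k x t = 0 := by
          intro t
          have h1 : ψ (u x t) = 0 := by
            by_contra hne
            have := hsupp _ hne i hiS
            rw [hui _ _ _ hij] at this; exact hcon this
          have h2 : ψ' x = 0 := by
            by_contra hne
            exact hcon (hψ's x hne i (by simp [hij, hiS]))
          simp [k, h1, h2]
        simp [this]
    have hcK : IsCompact ((EuclideanSpace.equiv (Fin m) ℝ) ⁻¹' (Set.pi univ fun _ => Icc (-R) R)) :=
      (EuclideanSpace.equiv (Fin m) ℝ).toHomeomorph.isCompact_preimage.2
        (isCompact_univ_pi fun _ => isCompact_Icc)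
    apply HasCompactSupport.intro hcK
    intro x hx
    by_contra hne
    apply hx
    simp only [mem_preimage, mem_univ_pi]
    intro i
    exact abs_le.1 (key x hne i)
  · intro x
    have hd : partialDeriv Ψ j x = (∏ i ∈ S, ρ (x i)) * k x (x j) := by
      have h1 : HasLineDerivAt ℝ Ψ (fderiv ℝ Ψ x (ee j)) x (ee j) :=
        ((hΨ.differentiable (by simp)) x).hasFDerivAt.hasLineDerivAt _
      have h2 : HasLineDerivAt ℝ Ψ ((∏ i ∈ S, ρ (x i)) * k x (x j)) x (ee j) := by
        unfold HasLineDerivAt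
        have e : (fun t : ℝ => Ψ (x + t • ee j)) = fun t : ℝ =>
            (∏ i ∈ S, ρ (x i)) * ((∫ t in Iic (x j), k x t) + ∫ s in (x j)..(x j + t), k x s) := by
          ext t
          simp only [Ψ]
          congr 1
          · apply Finset.prod_congr rfl
            intro i hi
            have : i ≠ j := fun h => hj (h ▸ hi)
            simp [this]
          · have hkk : k (x + t • ee j) = k x := by
              ext s; simp only [k, hus, hψ'j]
            rw [hkk, ← intervalIntegral.integral_Iic_sub_Iic (hki x).integrableOn 
              (hki x).integrableOn]
            simp
        rw [e]
        apply HasDerivAt.const_mul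
        apply HasDerivAt.const_add
        have h3 : HasDerivAt (fun v => ∫ s in (x j)..v, k x s) (k x (x j)) (x j + 0) := by
          rw [add_zero]
          exact (hkc x).integral_hasStrictDerivAt _ _ |>.hasDerivAt
        exact h3.comp_const_add (x j) 0
      exact h1.unique h2
    have hux : u x (x j) = x := by simp [u]
    rw [hd, Finset.prod_insert hj]
    simp only [k, hux]
    ring

lemma const_of_inv {m : ℕ} (ψ : EE m → ℂ) (h : ∀ i, ∀ (t : ℝ) x, ψ (x + t • ee i) = ψ x) (x : EE m) :
    ψ x = ψ 0 := by
  have key : ∀ (s : Finset (Fin m)) (y : EE m), ψ (y + ∑ i ∈ s, x i • ee i) = ψ y := by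
    intro s
    induction s using Finset.induction_on with
    | empty => intro y; simp
    | insert a s ha ih =>
      intro y
      rw [Finset.sum_insert ha, ← add_assoc, ih, h]
  have hx : (0 : EE m) + ∑ i, x i • ee i = x := by
    ext j
    simp [Finset.sum_apply, Pi.single_apply]
  have := key Finset.univ 0
  rwa [hx] at this

lemma exists_rho : ∃ ρ : ℝ → ℂ, ContDiff ℝ (⊤ : ℕ∞) ρ ∧ (∀ t, ρ t ≠ 0 → |t| ≤ 1) ∧
    ∫ t, ρ t = 1 := by
  let b : ContDiffBump (0 : ℝ) := ⟨1/2, 1, by norm_num, by norm_num⟩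
  refine ⟨fun t => ((b.normed volume t : ℝ) : ℂ), ?_, ?_, ?_⟩
  · exact Complex.ofRealCLM.contDiff.comp b.contDiff_normed
  · intro t ht
    have h1 : t ∈ Function.support (b.normed volume) := by
      simpa using ht
    rw [b.support_normed_eq] at h1
    simp only [mem_ball_zero_iff, Real.norm_eq_abs] at h1
    exact h1.le
  · rw [integral_complex_ofReal, b.integral_normed]; simp

lemma poincare {m : ℕ} (N : Submodule ℂ (EE m → ℂ))
    (hN : ∀ Ψ : EE m → ℂ, ContDiff ℝ (⊤ : ℕ∞) Ψ → HasCompactSupport Ψ → ∀ j, partialDeriv Ψ j ∈ N)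
    (ρ : ℝ → ℂ) (hρ : ContDiff ℝ (⊤ : ℕ∞) ρ)
    (hρR : ∀ t, ρ t ≠ 0 → |t| ≤ 1) (hρ1 : ∫ t, ρ t = 1)
    (φ : EE m → ℂ) (hφ : ContDiff ℝ (⊤ : ℕ∞) φ) (hc : HasCompactSupport φ) :
    ∃ C : ℂ, φ - C • (fun x : EE m => ∏ i, ρ (x i)) ∈ N := by
  obtain ⟨R, hR1, hR⟩ : ∃ R : ℝ, 1 ≤ R ∧ ∀ x, φ x ≠ 0 → ∀ i, |x i| ≤ R := by
    obtain ⟨r, hr⟩ := hc.isCompact.isBounded.subset_closedBall (0 : EE m)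
    refine ⟨max 1 r, le_max_left _ _, fun x hx i => ?_⟩
    have h1 := hr (subset_tsupport φ hx)
    rw [mem_closedBall_zero_iff] at h1
    have h2 : ‖x i‖ ≤ ‖x‖ := PiLp.norm_apply_le x i
    exact (h2.trans h1).trans (le_max_right _ _)
  have key : ∀ S : Finset (Fin m), ∃ ψ : EE m → ℂ, ContDiff ℝ (⊤ : ℕ∞) ψ ∧
      (∀ i ∈ S, ∀ (t : ℝ) x, ψ (x + t • ee i) = ψ x) ∧
      (∀ x, ψ x ≠ 0 → ∀ i ∉ S, |x i| ≤ R) ∧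
      (φ - fun x => (∏ i ∈ S, ρ (x i)) * ψ x) ∈ N := by
    intro S
    induction S using Finset.induction_on with
    | empty =>
      refine ⟨φ, hφ, by simp, fun x hx i _ => hR x hx i, ?_⟩
      convert N.zero_mem using 1
      ext x; simp
    | insert j S hj ih =>
      obtain ⟨ψ, h1, h2, h3, h4⟩ := ih
      obtain ⟨ψ', Ψ, g1, g2, g3, g4, g5, g6⟩ := step ρ hρ R (fun t ht => (hρR t ht).trans hR1) hρ1
        S j hj ψ h1 h2 h3
      refine ⟨ψ', g1, g2, g3, ?_⟩
      convert N.add_mem h4 (hN Ψ g4 g5 j) using 1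
      ext x
      simp only [Pi.sub_apply, Pi.add_apply, g6 x]
      ring
  obtain ⟨ψ, h1, h2, h3, h4⟩ := key Finset.univ
  refine ⟨ψ 0, ?_⟩
  convert h4 using 2
  ext x
  rw [const_of_inv ψ (fun i => h2 i (Finset.mem_univ i)) x]
  simp [mul_comm]

lemma integral_partial {m : ℕ} (Ψ : EE m → ℂ) (h : ContDiff ℝ (⊤ : ℕ∞) Ψ)
    (hc : HasCompactSupport Ψ) (j : Fin m) : ∫ x, partialDeriv Ψ j x = 0 := by
  have hd : Continuous (partialDeriv Ψ j) :=
    (h.continuous_fderiv (by simp)).clm_apply continuous_const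
  have hcd : HasCompactSupport (partialDeriv Ψ j) := hc.fderiv_apply (𝕜 := ℝ) _
  have := integral_smul_fderiv_eq_neg_fderiv_smul_of_integrable (μ := (volume : Measure (EE m)))
    (f := fun _ => (1 : ℝ)) (g := Ψ) (v := ee j) (𝕜 := ℝ)
    (by simp) (by simp only [one_smul]; exact hd.integrable_of_hasCompactSupport hcd)
    (by simpa using h.continuous.integrable_of_hasCompactSupport hc)
    (by fun_prop) (fun x _ => h.differentiable (by simp) x)
  simpa [partialDeriv] using this

lemma smooth_partial {m : ℕ} (Ψ : EE m → ℂ) (h : ContDiff ℝ (⊤ : ℕ∞) Ψ) (j : Fin m) :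
    ContDiff ℝ (⊤ : ℕ∞) (partialDeriv Ψ j) :=
  (h.fderiv_right (m := (⊤ : ℕ∞)) (by simp)).clm_apply contDiff_const

/-- A linear functional killing all derivatives is a multiple of the integral. -/
lemma functional_eq {n : ℕ} (ν : TestFunctions2 n →ₗ[ℂ] ℂ)
    (hν : ∀ (Ψ : TestFunctions2 n) (j : Fin (2 * n)) (h : TestFunctions2 n),
      (h : EE (2 * n) → ℂ) = partialDeriv (Ψ : EE (2 * n) → ℂ) j → ν h = 0) :
    ∃ c : ℂ, ∀ f : TestFunctions2 n, ν f = c * ∫ x, (f : EE (2 * n) → ℂ) x := by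
  have hint : ∀ f : TestFunctions2 n, Integrable (f : EE (2 * n) → ℂ) := fun f =>
    f.2.1.continuous.integrable_of_hasCompactSupport f.2.2
  let N : Submodule ℂ (EE (2 * n) → ℂ) :=
    { carrier := {h | ∃ hh : h ∈ TestFunctions2 n, ν ⟨h, hh⟩ = 0 ∧ ∫ x, h x = 0}
      zero_mem' := ⟨(TestFunctions2 n).zero_mem, ν.map_zero, by simp⟩
      add_mem' := by
        rintro a b ⟨ha, ha1, ha2⟩ ⟨hb, hb1, hb2⟩
        refine ⟨(TestFunctions2 n).add_mem ha hb, ?_, ?_⟩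
        · have := ν.map_add ⟨a, ha⟩ ⟨b, hb⟩
          rw [ha1, hb1, add_zero] at this
          exact this
        · simp only [Pi.add_apply]
          rw [integral_add (hint ⟨a, ha⟩) (hint ⟨b, hb⟩), ha2, hb2, add_zero]
      smul_mem' := by
        rintro c a ⟨ha, ha1, ha2⟩
        refine ⟨(TestFunctions2 n).smul_mem c ha, ?_, ?_⟩
        · have := ν.map_smul c ⟨a, ha⟩
          rw [ha1, smul_zero] at this
          exact this
        · simp only [Pi.smul_apply]
          rw [integral_smul, ha2, smul_zero] }
  have hN : ∀ Ψ : EE (2 * n) → ℂ, ContDiff ℝ (⊤ : ℕ∞) Ψ → HasCompactSupport Ψ →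
      ∀ j, partialDeriv Ψ j ∈ N := by
    intro Ψ h hc j
    have hm : partialDeriv Ψ j ∈ TestFunctions2 n :=
      ⟨smooth_partial Ψ h j, hc.fderiv_apply (𝕜 := ℝ) _⟩
    exact ⟨hm, hν ⟨Ψ, h, hc⟩ j ⟨_, hm⟩ rfl, integral_partial Ψ h hc j⟩
  obtain ⟨ρ, hρ, hρR, hρ1⟩ := exists_rho
  let χ : ContDiffBump (0 : EE (2 * n)) := ⟨1, 2, by norm_num, by norm_num⟩
  let φ₀ : TestFunctions2 n := ⟨fun x => ((χ x : ℝ) : ℂ),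
    Complex.ofRealCLM.contDiff.comp χ.contDiff,
    χ.hasCompactSupport.comp_left (g := fun r : ℝ => (r : ℂ)) (by simp)⟩
  have hφ₀ : ∫ x, (φ₀ : EE (2 * n) → ℂ) x ≠ 0 := by
    simp only [φ₀]
    rw [integral_complex_ofReal]
    exact_mod_cast (χ.integral_pos (μ := volume)).ne'
  obtain ⟨C₀, hC₀⟩ := poincare N hN ρ hρ hρR hρ1 φ₀ φ₀.2.1 φ₀.2.2
  have hC₀0 : C₀ ≠ 0 := by
    rintro rfl
    rw [zero_smul, sub_zero] at hC₀
    obtain ⟨_, _, h⟩ := hC₀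
    exact hφ₀ h
  refine ⟨ν φ₀ / ∫ x, (φ₀ : EE (2 * n) → ℂ) x, fun f => ?_⟩
  obtain ⟨C, hC⟩ := poincare N hN ρ hρ hρR hρ1 f f.2.1 f.2.2
  have hmem : C₀ • (f : EE (2 * n) → ℂ) - C • (φ₀ : EE (2 * n) → ℂ) ∈ N := by
    convert N.sub_mem (N.smul_mem C₀ hC) (N.smul_mem C hC₀) using 1
    ext x
    simp only [Pi.sub_apply, Pi.smul_apply, smul_eq_mul]
    ring
  obtain ⟨hh, h1, h2⟩ := hmem
  have h3 : ν (C₀ • f - C • φ₀) = 0 := h1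
  rw [map_sub, map_smul, map_smul, sub_eq_zero, smul_eq_mul, smul_eq_mul] at h3
  have h4 := integral_sub ((hint f).smul C₀) ((hint φ₀).smul C)
  have h5 : ∫ x, ((C₀ • (f : EE (2 * n) → ℂ)) x - (C • (φ₀ : EE (2 * n) → ℂ)) x) = 0 := h2
  rw [h5] at h4
  simp only [Pi.smul_apply, smul_eq_mul] at h4
  rw [integral_const_mul, integral_const_mul] at h4
  rw [div_mul_eq_mul_div, eq_div_iff hφ₀]
  apply mul_left_cancel₀ hC₀0
  linear_combination (∫ x, (φ₀ : EE (2 * n) → ℂ) x) * h3 + ν φ₀ * h4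

lemma partial_mul_exp {m : ℕ} (H : EE m → ℝ) (hH : ContDiff ℝ (⊤ : ℕ∞) H) (β : ℝ)
    (G : EE m → ℂ) (hG : ContDiff ℝ (⊤ : ℕ∞) G) (l : Fin m) (x : EE m) :
    partialDeriv (fun y => Complex.exp (β * (H y : ℂ)) * G y) l x =
      Complex.exp (β * (H x : ℂ)) * partialDeriv G l x +
      β * (Complex.exp (β * (H x : ℂ)) * G x) * partialDeriv (fun y => (H y : ℂ)) l x := by
  have hHc : ContDiff ℝ (⊤ : ℕ∞) (fun y => (H y : ℂ)) := Complex.ofRealCLM.contDiff.comp hH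
  have h1 : HasFDerivAt (fun y => (H y : ℂ)) (fderiv ℝ (fun y => (H y : ℂ)) x) x :=
    (hHc.differentiable (by simp) x).hasFDerivAt
  have h2 : HasFDerivAt G (fderiv ℝ G x) x := (hG.differentiable (by simp) x).hasFDerivAt
  have h3 := ((h1.const_mul (β : ℂ)).cexp).mul h2
  unfold partialDeriv
  have h4 : fderiv ℝ (fun y => Complex.exp (β * (H y : ℂ)) * G y) x = _ := h3.fderiv
  rw [h4]
  simp
  ring

lemma exists_coord {m : ℕ} (G : EE m → ℂ) (hG : HasCompactSupport G) (l : Fin m) :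
    ∃ f : EE m → ℂ, ContDiff ℝ (⊤ : ℕ∞) f ∧ HasCompactSupport f ∧
      ∀ x i j, partialDeriv f i x * partialDeriv G j x =
        (if i = l then 1 else 0) * partialDeriv G j x := by
  obtain ⟨r, hr⟩ := hG.isCompact.isBounded.subset_closedBall (0 : EE m)
  let χ : ContDiffBump (0 : EE m) := ⟨|r| + 1, |r| + 2, by positivity, by linarith⟩
  refine ⟨fun x => ((χ x * x l : ℝ) : ℂ), ?_, ?_, ?_⟩
  · exact Complex.ofRealCLM.contDiff.comp (χ.contDiff.mul (by fun_prop))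
  · exact (χ.hasCompactSupport.mul_right (f' := fun x : EE m => x l)).comp_left
      (g := fun r : ℝ => (r : ℂ)) (by simp)
  · intro x i j
    by_cases hx : x ∈ tsupport G
    · congr 1
      have hxb : x ∈ Metric.ball (0 : EE m) (|r| + 1) := by
        have := hr hx
        rw [mem_closedBall_zero_iff] at this
        rw [mem_ball_zero_iff]
        linarith [le_abs_self r]
      have hev : (fun x : EE m => ((χ x * x l : ℝ) : ℂ)) =ᶠ[𝓝 x]
          (Complex.ofRealCLM.comp (EuclideanSpace.proj l : EE m →L[ℝ] ℝ)) := by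
        filter_upwards [Metric.isOpen_ball.mem_nhds hxb] with y hy
        have : χ y = 1 := χ.one_of_mem_closedBall (Metric.ball_subset_closedBall hy)
        simp [this]
      unfold partialDeriv
      rw [hev.fderiv_eq, ContinuousLinearMap.fderiv]
      simp [eq_comm]
      split_ifs <;> simp
    · have : partialDeriv G j x = 0 := by
        unfold partialDeriv
        have h0 : fderiv ℝ G x = 0 := by
          by_contra hne
          exact hx (support_fderiv_subset ℝ hne)
        simp [h0]
      simp [this]

/-- For smooth real `H` and `β ∈ ℝ`, any `ℂ`-linear functional `μ₀` on
`C_c^∞(ℝ^{2n})` (no continuity assumed) satisfying the static classical KMS condition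
`μ₀({f,g} − β·g·{f,H}) = 0` for all `f, g` is of the form
`μ₀(f) = c ∫ e^{−βH(x)} f(x) d^{2n}x` for some constant `c ∈ ℂ`. -/
theorem static_classical_KMS_functional_is_Boltzmann_weighted_integral
    (n : ℕ) (hn : 1 ≤ n)
    (H : EuclideanSpace ℝ (Fin (2 * n)) → ℝ) (hH : ContDiff ℝ (⊤ : ℕ∞) H)
    (β : ℝ)
    (μ : TestFunctions2 n →ₗ[ℂ] ℂ)
    (hμ : ∀ (f g h : TestFunctions2 n),
      (h : EuclideanSpace ℝ (Fin (2 * n)) → ℂ) =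
        (fun x =>
          poissonBracket (f : EuclideanSpace ℝ (Fin (2 * n)) → ℂ)
              (g : EuclideanSpace ℝ (Fin (2 * n)) → ℂ) x -
            (β : ℂ) * (g : EuclideanSpace ℝ (Fin (2 * n)) → ℂ) x *
              poissonBracket (f : EuclideanSpace ℝ (Fin (2 * n)) → ℂ)
                (fun y => (H y : ℂ)) x) →
      μ h = 0) :
    ∃ c : ℂ, ∀ f : TestFunctions2 n,
      μ f = c * ∫ x, (Real.exp (-(β * H x)) : ℂ) *
        (f : EuclideanSpace ℝ (Fin (2 * n)) → ℂ) x := by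
  classical
  have hHc : ContDiff ℝ (⊤ : ℕ∞) (fun y => (H y : ℂ)) := Complex.ofRealCLM.contDiff.comp hH
  have hw : ContDiff ℝ (⊤ : ℕ∞) (fun y => Complex.exp (β * (H y : ℂ))) :=
    (contDiff_const.mul hHc).cexp
  have hw' : ContDiff ℝ (⊤ : ℕ∞) (fun y => ((Real.exp (-(β * H y)) : ℝ) : ℂ)) :=
    Complex.ofRealCLM.contDiff.comp (contDiff_const.mul hH).neg.exp
  -- multiplication by the weight
  let M : TestFunctions2 n →ₗ[ℂ] TestFunctions2 n :=
    { toFun := fun φ => ⟨fun y => Complex.exp (β * (H y : ℂ)) * (φ : EE (2 * n) → ℂ) y,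
        hw.mul φ.2.1, φ.2.2.mul_left⟩
      map_add' := by
        intro a b; ext x; simp [mul_add]
      map_smul' := by
        intro c a; ext x; simp; ring }
  have hM : ∀ (φ : TestFunctions2 n) x, (M φ : EE (2 * n) → ℂ) x =
    Complex.exp (β * (H x : ℂ)) * (φ : EE (2 * n) → ℂ) x := fun _ _ => rfl
  have hA : ∀ f G h : TestFunctions2 n,
      (∀ x, (h : EE (2 * n) → ℂ) x = poissonBracket (f : EE (2 * n) → ℂ) (G : EE (2 * n) → ℂ) x) →
      μ (M h) = 0 := by
    intro f G h hh
    apply hμ f (M G) (M h)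
    ext x
    rw [hM, hM, hh]
    have hp : ∀ l, partialDeriv (M G : EE (2 * n) → ℂ) l x = _ := fun l =>
      partial_mul_exp H hH β G G.2.1 l x
    unfold poissonBracket
    simp only [hp, Finset.mul_sum]
    rw [← Finset.sum_sub_distrib]
    apply Finset.sum_congr rfl
    intro k _
    ring
  have hν : ∀ (Ψ : TestFunctions2 n) (j : Fin (2 * n)) (h : TestFunctions2 n),
      (h : EE (2 * n) → ℂ) = partialDeriv (Ψ : EE (2 * n) → ℂ) j → (μ ∘ₗ M) h = 0 := by
    intro G j h hh
    rw [LinearMap.comp_apply]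
    by_cases hj : j.1 < n
    · obtain ⟨f, f1, f2, f3⟩ := exists_coord (G : EE (2 * n) → ℂ) G.2.2 ⟨n + j.1, by omega⟩
      have := hA ⟨f, f1, f2⟩ G (-h) (by
        intro x
        unfold poissonBracket
        simp only [f3, Fin.mk.injEq]
        rw [Finset.sum_eq_single ⟨j.1, hj⟩]
        · have hn0 : n ≠ 0 := by omega
          simp [hn0, hh]
        · intro k _ hk
          have h1 : ¬ (k.1 = n + j.1) := by omega
          have h2 : ¬ (k.1 = j.1) := fun h => hk (Fin.ext h)
          simp [h1, h2]
        · simp)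
      simpa using this
    · obtain ⟨f, f1, f2, f3⟩ := exists_coord (G : EE (2 * n) → ℂ) G.2.2 ⟨j.1 - n, by omega⟩
      apply hA ⟨f, f1, f2⟩ G h
      intro x
      unfold poissonBracket
      simp only [f3, Fin.mk.injEq]
      rw [Finset.sum_eq_single ⟨j.1 - n, by omega⟩]
      · have h1 : n ≠ 0 := by omega
        have h2 : (⟨n + (j.1 - n), by omega⟩ : Fin (2 * n)) = j := Fin.ext (by simp; omega)
        simp [h1, h2, hh]
      · intro k _ hk
        have h1 : ¬ (n + k.1 = j.1 - n) := by omega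
        have h2 : ¬ (k.1 = j.1 - n) := fun h => hk (Fin.ext h)
        simp [h1, h2]
      · simp
  obtain ⟨c, hc⟩ := functional_eq (μ ∘ₗ M) hν
  refine ⟨c, fun f => ?_⟩
  let f' : TestFunctions2 n := ⟨fun y => ((Real.exp (-(β * H y)) : ℝ) : ℂ) *
    (f : EE (2 * n) → ℂ) y, hw'.mul f.2.1, f.2.2.mul_left⟩
  have hf' : M f' = f := by
    ext x
    rw [hM]
    simp only [f']
    rw [← mul_assoc, Complex.ofReal_exp, ← Complex.exp_add]
    simp
  have := hc f'
  rw [LinearMap.comp_apply, hf'] at this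
  exact this
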